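/- For every non-standard model M of Peano arithmetic (i.e., a model of PA not isomorphic to the standard model ℕ), the standard system SSy(M) is a Scott set: (S1) if X and Y are both in SSy(M) then so is X ⊕ Y = 2X ∪ (2Y + 1); (S2) if X ∈ SSy(M) and Y ⊆ ℕ is Turing reducible to X then Y ∈ SSy(M); (S3) if SSy(M) contains (a code of) an infinite binary tree T then SSy(M) contains an infinite path of T. -/

import Mathlib

open FirstOrder FirstOrder.Language

/-- Function symbols of the language of arithmetic: `0`, `1`, `+`, `·`. -/
inductive arithFunc : ℕ → Type
  | zero : arithFunc 0
  | one : arithFunc 0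
  | add : arithFunc 2
  | mul : arithFunc 2
  deriving DecidableEq

/-- Relation symbols of the language of arithmetic: `<`. -/
inductive arithRel : ℕ → Type
  | lt : arithRel 2
  deriving DecidableEq

/-- The first-order language of arithmetic `{0, 1, +, ·, <}`. -/
def arith : FirstOrder.Language := ⟨arithFunc, arithRel⟩

namespace Arith

variable {M : Type*} [arith.Structure M]

/-- The interpretation of `0`. -/
def zeroM (M : Type*) [arith.Structure M] : M :=
  Structure.funMap (L := arith) arithFunc.zero ![]

/-- The interpretation of `1`. -/
def oneM (M : Type*) [arith.Structure M] : M :=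
  Structure.funMap (L := arith) arithFunc.one ![]

/-- The interpretation of `+`. -/
def addM (x y : M) : M := Structure.funMap (L := arith) arithFunc.add ![x, y]

/-- The interpretation of `·`. -/
def mulM (x y : M) : M := Structure.funMap (L := arith) arithFunc.mul ![x, y]

/-- The interpretation of `<`. -/
def ltM (x y : M) : Prop := Structure.RelMap (L := arith) arithRel.lt ![x, y]

/-- Non-strict order. -/
def leM (x y : M) : Prop := ltM x y ∨ x = y

/-- The numeral `n` in `M`: `0`, or `1 + 1 + ⋯ + 1`. -/
def numeral (M : Type*) [arith.Structure M] : ℕ → M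
  | 0 => zeroM M
  | n + 1 => addM (numeral M n) (oneM M)

/-- The standard `arith`-structure on `ℕ`. -/
instance : arith.Structure ℕ where
  funMap {n} f v :=
    match f with
    | .zero => 0
    | .one => 1
    | .add => v 0 + v 1
    | .mul => v 0 * v 1
  RelMap {n} r v :=
    match r with
    | .lt => v 0 < v 1

/-- `M` is a model of Peano arithmetic: it satisfies the finitely many basic axioms of
`PA` together with induction for all parametrically definable sets (which is equivalent
to the usual first-order induction scheme). -/
def IsPAModel (M : Type*) [arith.Structure M] : Prop :=
  (∀ x : M, addM x (zeroM M) = x) ∧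
  (∀ x y : M, addM x (addM y (oneM M)) = addM (addM x y) (oneM M)) ∧
  (∀ x : M, mulM x (zeroM M) = zeroM M) ∧
  (∀ x y : M, mulM x (addM y (oneM M)) = addM (mulM x y) x) ∧
  (∀ x : M, ¬ ltM x (zeroM M)) ∧
  (∀ x y : M, ltM x (addM y (oneM M)) ↔ (ltM x y ∨ x = y)) ∧
  (∀ x : M, addM x (oneM M) ≠ zeroM M) ∧
  (∀ x y : M, addM x (oneM M) = addM y (oneM M) → x = y) ∧
  (∀ s : Set M, Set.Definable₁ (Set.univ : Set M) arith s →
    zeroM M ∈ s → (∀ x ∈ s, addM x (oneM M) ∈ s) → ∀ x : M, x ∈ s)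

/-- An element of `M` is standard if it is a numeral. -/
def IsStd (x : M) : Prop := ∃ n : ℕ, x = numeral M n

/-- `M` is a non-standard model of `PA`: a model of `PA` not isomorphic to the standard
model `ℕ`. -/
def NonstandardModel (M : Type*) [arith.Structure M] : Prop :=
  IsPAModel M ∧ ¬ Nonempty (M ≃[arith] ℕ)

/-- `(x)_i = 1`: the `i`-th binary digit of `x` is `1`, for standard `i`.  This is expressed
by saying that `x = u·2^(i+1) + (2^i + v)` with `v < 2^i`, where `2^i`, `2^(i+1)` are
numerals. -/
def digitB (x : M) (i : ℕ) : Prop :=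
  ∃ u v : M, x = addM (mulM u (numeral M (2 ^ (i + 1)))) (addM (numeral M (2 ^ i)) v) ∧
    ltM v (numeral M (2 ^ i))

/-- The standard system of `M`: the collection of subsets of `ℕ` coded by some
non-standard element of `M` (via its standard binary digits). -/
def SSy (M : Type*) [arith.Structure M] : Set (Set ℕ) :=
  {X | ∃ a : M, ¬ IsStd a ∧ ∀ i : ℕ, i ∈ X ↔ digitB a i}

/-- A function `M → M` is definable (with parameters) if its graph is a definable set. -/
def DefinableFun₁ (f : M → M) : Prop :=
  Set.Definable (Set.univ : Set M) arith {v : Fin 2 → M | f (v 0) = v 1}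

/-- A `k`-ary function `M^k → M` is definable (with parameters) if its graph is a
definable set. -/
def DefinableFun {k : ℕ} (F : (Fin k → M) → M) : Prop :=
  Set.Definable (Set.univ : Set M) arith
    {v : Fin (k + 1) → M | F (fun i => v i.castSucc) = v (Fin.last k)}

/-- `c` is the internal cardinality of the set `D ⊆ M`: there is an `M`-definable
bijection between `{x : x < c}` and `D`. -/
def InternalCard (D : Set M) (c : M) : Prop :=
  ∃ f : M → M, DefinableFun₁ f ∧ Set.BijOn f {x : M | ltM x c} D

/-- `y = 2^x` in the model `M`, expressed via the existence of a definable function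
satisfying the recursion of the base-`2` exponential up to `x`. -/
def IsPow2 (x y : M) : Prop :=
  ∃ f : M → M, DefinableFun₁ f ∧ f (zeroM M) = oneM M ∧
    (∀ z : M, ltM z x → f (addM z (oneM M)) = addM (f z) (f z)) ∧ f x = y

end Arith

namespace Arith

/-- Relativized partial recursiveness: `RecursiveIn O f` means the partial function `f`
is partial recursive in the total oracle `O`.  This mirrors `Nat.Partrec`, with an extra
constructor for the oracle. -/
inductive RecursiveIn (O : ℕ → ℕ) : (ℕ →. ℕ) → Prop
  | zero : RecursiveIn O (pure 0)
  | succ : RecursiveIn O Nat.succ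
  | left : RecursiveIn O ↑fun n : ℕ => n.unpair.1
  | right : RecursiveIn O ↑fun n : ℕ => n.unpair.2
  | oracle : RecursiveIn O O
  | pair {f g} : RecursiveIn O f → RecursiveIn O g →
      RecursiveIn O fun n => Nat.pair <$> f n <*> g n
  | comp {f g} : RecursiveIn O f → RecursiveIn O g → RecursiveIn O fun n => g n >>= f
  | prec {f g} : RecursiveIn O f → RecursiveIn O g → RecursiveIn O (Nat.unpaired fun a n =>
      n.rec (f a) fun y IH => do let i ← IH; g (Nat.pair a (Nat.pair y i)))
  | rfind {f} : RecursiveIn O f →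
      RecursiveIn O fun a => Nat.rfind fun n => (fun m => m = 0) <$> f (Nat.pair a n)

open Classical in
/-- The characteristic function of a set of natural numbers. -/
noncomputable def charFn (X : Set ℕ) : ℕ → ℕ := fun n => if n ∈ X then 1 else 0

/-- Turing reducibility between sets of natural numbers. -/
def TuringLE (Y X : Set ℕ) : Prop := RecursiveIn (charFn X) (charFn Y)

/-- The Turing join `X ⊕ Y = 2X ∪ (2Y + 1)`. -/
def turingJoin (X Y : Set ℕ) : Set ℕ :=
  {n | ∃ m ∈ X, n = 2 * m} ∪ {n | ∃ m ∈ Y, n = 2 * m + 1}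

/-- A Turing ideal: a collection of subsets of `ℕ` closed under Turing join and Turing
reducibility. -/
def TuringIdeal (S : Set (Set ℕ)) : Prop :=
  (∀ X ∈ S, ∀ Y ∈ S, turingJoin X Y ∈ S) ∧
  (∀ X ∈ S, ∀ Y : Set ℕ, TuringLE Y X → Y ∈ S)

/-- The Turing ideal generated by a collection of subsets of `ℕ`. -/
def tIdealGen (C : Set (Set ℕ)) : Set (Set ℕ) :=
  ⋂₀ {I | TuringIdeal I ∧ C ⊆ I}

/-- `T ⊆ ℕ` codes a binary tree: the set of finite binary sequences whose codes lie in
`T` is closed under initial segments. -/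
def IsBinTreeSet (T : Set ℕ) : Prop :=
  ∀ s : List Bool, Encodable.encode s ∈ T → ∀ t : List Bool, t <+: s → Encodable.encode t ∈ T

/-- The tree coded by `T` is infinite. -/
def TreeInf (T : Set ℕ) : Prop := {s : List Bool | Encodable.encode s ∈ T}.Infinite

/-- `P ⊆ ℕ`, viewed as an infinite branch via its characteristic function, is a path
through the tree coded by `T`. -/
def PathThrough (P T : Set ℕ) : Prop :=
  ∀ f : ℕ → Bool, (∀ i : ℕ, f i = true ↔ i ∈ P) →
    ∀ m : ℕ, Encodable.encode (List.ofFn fun i : Fin m => f i) ∈ T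

/-- A Scott set: a nonempty Turing ideal such that every infinite binary tree in it has
an infinite path in it. -/
def ScottSet (S : Set (Set ℕ)) : Prop :=
  S.Nonempty ∧ TuringIdeal S ∧
  ∀ T ∈ S, IsBinTreeSet T → TreeInf T → ∃ P ∈ S, PathThrough P T

open Classical in
/-- The characteristic function of a set, with values in `Bool`. -/
noncomputable def chi (X : Set ℕ) : ℕ → Bool := fun n => if n ∈ X then true else false

/-- The iterated Turing join `⊕_{i<k} X i`. -/
def joinMany : {k : ℕ} → (Fin k → Set ℕ) → Set ℕ
  | 0, _ => ∅
  | (k + 1), X => turingJoin (joinMany fun i => X i.castSucc) (X (Fin.last k))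

end Arith

namespace Arith

/-! ### Parametrically definable predicates -/

section Definability

variable {M : Type*} [arith.Structure M]

/-- A function of finitely many of the variables `v 0, v 1, …` given by a term with parameters. -/
def TermFun (f : (ℕ → M) → M) : Prop :=
  ∃ t : arith[[(Set.univ : Set M)]].Term ℕ, ∀ v, t.realize v = f v

/-- A predicate in finitely many of the variables `v 0, v 1, …` that is definable with
parameters. -/
def Def (P : (ℕ → M) → Prop) : Prop :=
  ∃ φ : arith[[(Set.univ : Set M)]].Formula ℕ, ∀ v, φ.Realize v ↔ P v

/-- A unary predicate definable with parameters. -/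
def Def₁ (P : M → Prop) : Prop := Def fun v : ℕ → M => P (v 0)

/-- A binary relation definable with parameters. -/
def Def₂ (R : M → M → Prop) : Prop := Def fun v : ℕ → M => R (v 0) (v 1)

namespace TermFun

variable {f g : (ℕ → M) → M}

theorem var (i : ℕ) : TermFun fun v : ℕ → M => v i := ⟨.var i, fun _ => rfl⟩

theorem const (c : M) : TermFun fun _ : ℕ → M => c :=
  ⟨(arith.con (⟨c, trivial⟩ : (Set.univ : Set M))).term, fun _ => Term.realize_con⟩

theorem add (hf : TermFun f) (hg : TermFun g) : TermFun fun v => addM (f v) (g v) := by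
  obtain ⟨s, hs⟩ := hf
  obtain ⟨t, ht⟩ := hg
  refine ⟨Functions.apply₂ (L := arith[[(Set.univ : Set M)]])
    (Sum.inl (arithFunc.add : arith.Functions 2)) s t, fun v => ?_⟩
  refine Term.realize_functions_apply₂.trans ?_
  rw [hs, ht]
  rfl

theorem mul (hf : TermFun f) (hg : TermFun g) : TermFun fun v => mulM (f v) (g v) := by
  obtain ⟨s, hs⟩ := hf
  obtain ⟨t, ht⟩ := hg
  refine ⟨Functions.apply₂ (L := arith[[(Set.univ : Set M)]])
    (Sum.inl (arithFunc.mul : arith.Functions 2)) s t, fun v => ?_⟩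
  refine Term.realize_functions_apply₂.trans ?_
  rw [hs, ht]
  rfl

end TermFun

namespace Def

variable {f g : (ℕ → M) → M} {P Q : (ℕ → M) → Prop}

theorem eq (hf : TermFun f) (hg : TermFun g) : Def fun v => f v = g v := by
  obtain ⟨s, hs⟩ := hf
  obtain ⟨t, ht⟩ := hg
  exact ⟨s.equal t, fun v => by rw [Formula.realize_equal, hs, ht]⟩

theorem lt (hf : TermFun f) (hg : TermFun g) : Def fun v => ltM (f v) (g v) := by
  obtain ⟨s, hs⟩ := hf
  obtain ⟨t, ht⟩ := hg
  refine ⟨Relations.formula₂ (L := arith[[(Set.univ : Set M)]])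
    (Sum.inl (arithRel.lt : arith.Relations 2)) s t, fun v => ?_⟩
  refine Formula.realize_rel₂.trans ?_
  rw [hs, ht]
  rfl

theorem not (hP : Def P) : Def fun v => ¬ P v := by
  obtain ⟨φ, hφ⟩ := hP
  exact ⟨φ.not, fun v => by rw [Formula.realize_not, hφ]⟩

theorem imp (hP : Def P) (hQ : Def Q) : Def fun v => P v → Q v := by
  obtain ⟨φ, hφ⟩ := hP
  obtain ⟨ψ, hψ⟩ := hQ
  exact ⟨φ.imp ψ, fun v => by rw [Formula.realize_imp, hφ, hψ]⟩

theorem and (hP : Def P) (hQ : Def Q) : Def fun v => P v ∧ Q v := by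
  obtain ⟨φ, hφ⟩ := hP
  obtain ⟨ψ, hψ⟩ := hQ
  exact ⟨φ ⊓ ψ, fun v => by rw [Formula.realize_inf, hφ, hψ]⟩

theorem or (hP : Def P) (hQ : Def Q) : Def fun v => P v ∨ Q v := by
  obtain ⟨φ, hφ⟩ := hP
  obtain ⟨ψ, hψ⟩ := hQ
  exact ⟨φ ⊔ ψ, fun v => by rw [Formula.realize_sup, hφ, hψ]⟩

theorem iff (hP : Def P) (hQ : Def Q) : Def fun v => P v ↔ Q v := by
  simpa only [iff_iff_implies_and_implies] using (hP.imp hQ).and (hQ.imp hP)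

theorem all {P : (ℕ → M) → M → Prop} (hP : Def fun w => P (fun i => w (i + 1)) (w 0)) :
    Def fun v => ∀ x, P v x := by
  obtain ⟨φ, hφ⟩ := hP
  let g : ℕ → ℕ ⊕ Fin 1 := fun i => Nat.casesOn i (Sum.inr 0) Sum.inl
  refine ⟨(BoundedFormula.relabel (n := 1) (k := 0) g φ).all, fun v => ?_⟩
  rw [Formula.Realize, BoundedFormula.realize_all]
  refine forall_congr' fun x => ?_
  rw [BoundedFormula.realize_relabel]
  have key := hφ (fun i => Nat.casesOn i x v)
  rw [Formula.Realize] at key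
  refine Iff.trans (iff_of_eq ?_) key
  congr 1
  · funext i
    cases i <;> rfl
  · exact Subsingleton.elim _ _

theorem ex {P : (ℕ → M) → M → Prop} (hP : Def fun w => P (fun i => w (i + 1)) (w 0)) :
    Def fun v => ∃ x, P v x := by
  simpa only [not_forall, not_not] using (all (P := fun v x => ¬ P v x) hP.not).not

theorem subst (hP : Def P) {F : ℕ → (ℕ → M) → M} (hF : ∀ i, TermFun (F i)) :
    Def fun v => P fun i => F i v := by
  obtain ⟨φ, hφ⟩ := hP
  choose t ht using hF
  refine ⟨BoundedFormula.subst φ t, fun v => ?_⟩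
  refine Iff.trans ?_ (hφ _)
  rw [Formula.Realize, BoundedFormula.realize_subst, Formula.Realize]
  simp only [ht]

end Def

theorem Def₁.app {P : M → Prop} (hP : Def₁ P) {f : (ℕ → M) → M} (hf : TermFun f) :
    Def fun v => P (f v) :=
  Def.subst hP (F := fun _ => f) fun _ => hf

theorem Def₂.app {R : M → M → Prop} (hR : Def₂ R) {f g : (ℕ → M) → M} (hf : TermFun f)
    (hg : TermFun g) : Def fun v => R (f v) (g v) :=
  Def.subst hR (F := fun i => Nat.casesOn i f fun _ => g) fun i => by cases i <;> assumption

theorem Def₁.definable₁ {P : M → Prop} (hP : Def₁ P) :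
    Set.Definable₁ (Set.univ : Set M) arith {x | P x} := by
  obtain ⟨φ, hφ⟩ := hP
  refine ⟨φ.relabel fun _ => 0, ?_⟩
  ext v
  exact (hφ (v ∘ fun _ => 0)).symm.trans Formula.realize_relabel.symm

end Definability

/-! ### Standard elements of models of Peano arithmetic -/

section Standard

variable {M : Type*} [arith.Structure M]

theorem numeral_succ (M : Type*) [arith.Structure M] (n : ℕ) :
    addM (numeral M n) (oneM M) = numeral M (n + 1) := rfl

theorem isStd_numeral (n : ℕ) : IsStd (numeral M n) := ⟨n, rfl⟩

namespace IsPAModel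

theorem add_zero (h : IsPAModel M) (x : M) : addM x (zeroM M) = x := h.1 x

theorem add_succ (h : IsPAModel M) (x y : M) :
    addM x (addM y (oneM M)) = addM (addM x y) (oneM M) := h.2.1 x y

theorem mul_zero (h : IsPAModel M) (x : M) : mulM x (zeroM M) = zeroM M := h.2.2.1 x

theorem mul_succ (h : IsPAModel M) (x y : M) :
    mulM x (addM y (oneM M)) = addM (mulM x y) x := h.2.2.2.1 x y

theorem not_lt_zero (h : IsPAModel M) (x : M) : ¬ ltM x (zeroM M) := h.2.2.2.2.1 x

theorem lt_succ_iff (h : IsPAModel M) {x y : M} :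
    ltM x (addM y (oneM M)) ↔ ltM x y ∨ x = y := h.2.2.2.2.2.1 x y

theorem succ_ne_zero (h : IsPAModel M) (x : M) : addM x (oneM M) ≠ zeroM M :=
  h.2.2.2.2.2.2.1 x

theorem succ_inj (h : IsPAModel M) {x y : M} (hxy : addM x (oneM M) = addM y (oneM M)) :
    x = y := h.2.2.2.2.2.2.2.1 x y hxy

theorem induction (h : IsPAModel M) {P : M → Prop} (hP : Def₁ P) (zero : P (zeroM M))
    (succ : ∀ x, P x → P (addM x (oneM M))) (x : M) : P x :=
  h.2.2.2.2.2.2.2.2 {x | P x} hP.definable₁ zero succ x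

theorem numeral_add (h : IsPAModel M) (m n : ℕ) :
    addM (numeral M m) (numeral M n) = numeral M (m + n) := by
  induction n with
  | zero => exact h.add_zero _
  | succ n ih => rw [numeral, h.add_succ, ih]; rfl

theorem numeral_mul (h : IsPAModel M) (m n : ℕ) :
    mulM (numeral M m) (numeral M n) = numeral M (m * n) := by
  induction n with
  | zero => exact h.mul_zero _
  | succ n ih => rw [numeral, h.mul_succ, ih, h.numeral_add]; rfl

theorem numeral_injective (h : IsPAModel M) : Function.Injective (numeral M) := by
  intro m n
  induction m generalizing n with
  | zero =>
    cases n with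
    | zero => exact fun _ => rfl
    | succ n => exact fun e => absurd e.symm (h.succ_ne_zero _)
  | succ m ih =>
    cases n with
    | zero => exact fun e => absurd e (h.succ_ne_zero _)
    | succ n => exact fun e => congrArg _ (ih (h.succ_inj e))

theorem numeral_inj (h : IsPAModel M) {m n : ℕ} : numeral M m = numeral M n ↔ m = n :=
  h.numeral_injective.eq_iff

theorem lt_numeral_iff (h : IsPAModel M) {x : M} {n : ℕ} :
    ltM x (numeral M n) ↔ ∃ m < n, x = numeral M m := by
  induction n with
  | zero =>
    exact ⟨fun hx => absurd hx (h.not_lt_zero x), fun ⟨_, hm, _⟩ => absurd hm (Nat.not_lt_zero _)⟩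
  | succ n ih =>
    rw [numeral, h.lt_succ_iff, ih]
    constructor
    · rintro (⟨m, hm, rfl⟩ | rfl)
      · exact ⟨m, by omega, rfl⟩
      · exact ⟨n, by omega, rfl⟩
    · rintro ⟨m, hm, rfl⟩
      rcases Nat.lt_succ_iff_lt_or_eq.1 hm with hm | rfl
      · exact Or.inl ⟨m, hm, rfl⟩
      · exact Or.inr rfl

theorem numeral_lt (h : IsPAModel M) {m n : ℕ} :
    ltM (numeral M m) (numeral M n) ↔ m < n := by
  rw [h.lt_numeral_iff]
  constructor
  · rintro ⟨k, hk, e⟩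
    rwa [h.numeral_injective e]
  · exact fun hm => ⟨m, hm, rfl⟩

theorem zero_or_succ (h : IsPAModel M) (x : M) :
    x = zeroM M ∨ ∃ y, x = addM y (oneM M) := by
  refine h.induction (P := fun x => x = zeroM M ∨ ∃ y, x = addM y (oneM M)) ?_ (Or.inl rfl)
    (fun x _ => Or.inr ⟨x, rfl⟩) x
  apply_rules [TermFun.var, TermFun.const, TermFun.add, Def.eq, Def.or, Def.ex]

theorem numeral_lt_or_isStd (h : IsPAModel M) (n : ℕ) (x : M) :
    ltM (numeral M n) x ∨ IsStd x := by
  induction n with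
  | zero =>
    suffices x = zeroM M ∨ ltM (zeroM M) x from this.symm.imp id fun e => ⟨0, e⟩
    refine h.induction (P := fun x => x = zeroM M ∨ ltM (zeroM M) x) ?_ (Or.inl rfl) ?_ x
    · apply_rules [TermFun.var, TermFun.const, Def.eq, Def.lt, Def.or]
    · rintro x hx
      exact Or.inr (h.lt_succ_iff.2 (hx.symm.imp id Eq.symm))
  | succ n ih =>
    refine ih.elim (fun hx => ?_) Or.inr
    suffices ltM (numeral M (n + 1)) x ∨ x = numeral M (n + 1) from
      this.imp id fun e => ⟨n + 1, e⟩
    revert hx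
    refine h.induction (P := fun x => ltM (numeral M n) x →
      ltM (numeral M (n + 1)) x ∨ x = numeral M (n + 1)) ?_ ?_ ?_ x
    · apply_rules [TermFun.var, TermFun.const, Def.eq, Def.lt, Def.or, Def.imp]
    · exact fun hx => absurd hx (h.not_lt_zero _)
    · rintro x ih hx
      rcases h.lt_succ_iff.1 hx with hx | rfl
      · exact Or.inl (h.lt_succ_iff.2 ((ih hx).imp id Eq.symm))
      · exact Or.inr rfl

theorem isStd_of_lt (h : IsPAModel M) {x y : M} (hxy : ltM x y) (hy : IsStd y) : IsStd x := by
  obtain ⟨n, rfl⟩ := hy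
  obtain ⟨m, -, rfl⟩ := h.lt_numeral_iff.1 hxy
  exact isStd_numeral m

theorem isStd_of_add (h : IsPAModel M) {x y : M} (hxy : IsStd (addM x y)) :
    IsStd x ∧ IsStd y := by
  obtain ⟨n, hn⟩ := hxy
  induction n generalizing y with
  | zero =>
    rcases h.zero_or_succ y with rfl | ⟨y, rfl⟩
    · rw [h.add_zero] at hn
      exact ⟨⟨0, hn⟩, ⟨0, rfl⟩⟩
    · rw [h.add_succ] at hn
      exact absurd hn (h.succ_ne_zero _)
  | succ n ih =>
    rcases h.zero_or_succ y with rfl | ⟨y, rfl⟩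
    · rw [h.add_zero] at hn
      exact ⟨⟨n + 1, hn⟩, ⟨0, rfl⟩⟩
    · rw [h.add_succ] at hn
      obtain ⟨hx, k, rfl⟩ := ih (h.succ_inj hn)
      exact ⟨hx, ⟨k + 1, rfl⟩⟩

theorem isStd_of_mul_succ (h : IsPAModel M) {x y : M}
    (hxy : IsStd (mulM x (addM y (oneM M)))) : IsStd x := by
  rw [h.mul_succ] at hxy
  exact (h.isStd_of_add hxy).2

end IsPAModel

theorem NonstandardModel.exists_not_isStd (hM : NonstandardModel M) : ∃ x : M, ¬ IsStd x := by
  by_contra! hstd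
  have h := hM.1
  let e : ℕ ≃ M := Equiv.ofBijective (numeral M)
    ⟨h.numeral_injective, fun x => (hstd x).imp fun _ => Eq.symm⟩
  refine hM.2 ⟨Equiv.toFun ⟨fun i => i.symm, fun i => i.symm, fun _ => rfl, fun _ => rfl⟩
    (⟨e, ?_, ?_⟩ : ℕ ≃[arith] M)⟩
  · intro n f v
    cases f with
    | zero => exact congrArg (Structure.funMap (L := arith) arithFunc.zero) (Subsingleton.elim _ _)
    | one =>
      have h1 : numeral M 1 = oneM M := by
        obtain ⟨n, hn⟩ := hstd (oneM M)
        have := h.numeral_add 0 n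
        rw [← hn, Nat.zero_add, ← hn] at this
        exact this
      exact h1.trans
        (congrArg (Structure.funMap (L := arith) arithFunc.one) (Subsingleton.elim _ _))
    | add =>
      refine (h.numeral_add (v 0) (v 1)).symm.trans
        (congrArg (Structure.funMap (L := arith) arithFunc.add) (funext fun i => ?_))
      fin_cases i <;> rfl
    | mul =>
      refine (h.numeral_mul (v 0) (v 1)).symm.trans
        (congrArg (Structure.funMap (L := arith) arithFunc.mul) (funext fun i => ?_))
      fin_cases i <;> rfl
  · intro n r v
    cases r with
    | lt =>
      refine Iff.trans (iff_of_eq ?_) (h.numeral_lt (m := v 0) (n := v 1))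
      refine congrArg (Structure.RelMap (L := arith) arithRel.lt) (funext fun i => ?_)
      fin_cases i <;> rfl

theorem NonstandardModel.overspill (hM : NonstandardModel M) {P : M → Prop} (hP : Def₁ P)
    (hstd : ∀ n : ℕ, P (numeral M n)) : ∃ x, ¬ IsStd x ∧ P x := by
  by_contra! hcon
  obtain ⟨a, ha⟩ := hM.exists_not_isStd
  refine hcon a ha (hM.1.induction hP (hstd 0) (fun x hx => ?_) a)
  obtain ⟨n, rfl⟩ := not_not.1 fun hx' => hcon x hx' hx
  exact hstd (n + 1)

end Standard

/-! ### Recursion along the standard cut -/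

section Recursion

variable {M : Type*} [arith.Structure M]

/-- `y` is the remainder of `c` modulo `(i + 1) * d + 1`. -/
def IsBeta (c d i y : M) : Prop :=
  ltM y (addM (mulM (addM i (oneM M)) d) (oneM M)) ∧
    ∃ q, (ltM q c ∨ q = c) ∧ c = addM (mulM q (addM (mulM (addM i (oneM M)) d) (oneM M))) y

/-- `y` is the only remainder of `c` modulo `(i + 1) * d + 1`. -/
def IsUniqueBeta (c d i y : M) : Prop := IsBeta c d i y ∧ ∀ z, IsBeta c d i z → z = y

/-- Some sequence coded by the `β` function starts in `R`, takes steps in `S`, and has `n`-th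
entry `z`. -/
def RecGraph (R : M → Prop) (S : M → M → M → Prop) (n z : M) : Prop :=
  ∃ c d, (∀ e, IsUniqueBeta c d (zeroM M) e → R e) ∧
    (∀ k, ltM k n → ∃ e e', IsUniqueBeta c d k e ∧
      IsUniqueBeta c d (addM k (oneM M)) e' ∧ S k e e') ∧
    IsUniqueBeta c d n z

theorem Def.isUniqueBeta {c d i y : (ℕ → M) → M} (hc : TermFun c) (hd : TermFun d)
    (hi : TermFun i) (hy : TermFun y) : Def fun v => IsUniqueBeta (c v) (d v) (i v) (y v) := by
  have key : Def fun v : ℕ → M => IsUniqueBeta (v 0) (v 1) (v 2) (v 3) := by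
    unfold IsUniqueBeta IsBeta
    refine Def.and ?_ (Def.all ?_) <;> apply_rules [TermFun.var, TermFun.const, TermFun.add,
      TermFun.mul, Def.eq, Def.lt, Def.and, Def.or, Def.imp, Def.all, Def.ex]
  refine key.subst (F := fun j => ([c, d, i][j]?).getD y) fun j => ?_
  match j with
  | 0 => exact hc
  | 1 => exact hd
  | 2 => exact hi
  | j + 3 => exact hy

theorem TermFun.shift {f : (ℕ → M) → M} (hf : TermFun f) :
    TermFun fun w => f fun i => w (i + 1) := by
  obtain ⟨t, ht⟩ := hf
  exact ⟨t.relabel Nat.succ, fun v => by rw [Term.realize_relabel, ht]; rfl⟩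

theorem Def.recGraph {R : (ℕ → M) → M → Prop} {S : (ℕ → M) → M → M → M → Prop}
    (hR : Def fun w => R (fun i => w (i + 1)) (w 0))
    (hS : Def fun w => S (fun i => w (i + 3)) (w 2) (w 1) (w 0))
    {n z : (ℕ → M) → M} (hn : TermFun n) (hz : TermFun z) :
    Def fun v => RecGraph (R v) (S v) (n v) (z v) := by
  have hR' : Def fun w => R (fun i => w (i + 3)) (w 0) :=
    hR.subst (F := fun i v => Nat.casesOn i (v 0) fun i => v (i + 3)) fun i => by
      cases i <;> exact TermFun.var _
  have hS' : Def fun w => S (fun i => w (i + 5)) (w 2) (w 1) (w 0) :=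
    hS.subst (F := fun i v => match i with
      | 0 => v 0
      | 1 => v 1
      | 2 => v 2
      | i + 3 => v (i + 5)) fun i => by
      match i with
      | 0 | 1 | 2 | i + 3 => exact TermFun.var _
  have hn2 : TermFun fun w => n fun i => w (i + 2) := hn.shift.shift
  have hz2 : TermFun fun w => z fun i => w (i + 2) := hz.shift.shift
  unfold RecGraph
  refine Def.ex (Def.ex (Def.and (Def.all (Def.imp ?_ hR')) (Def.and (Def.all (Def.imp ?_
    (Def.ex (Def.ex (Def.and ?_ (Def.and ?_ hS')))))) ?_)))
  · apply_rules [Def.isUniqueBeta, TermFun.var, TermFun.const]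
  · exact Def.lt (TermFun.var 0) hn2.shift
  · apply_rules [Def.isUniqueBeta, TermFun.var, TermFun.const]
  · apply_rules [Def.isUniqueBeta, TermFun.var, TermFun.const, TermFun.add]
  · exact Def.isUniqueBeta (TermFun.var _) (TermFun.var _) hn2 hz2

namespace IsPAModel

theorem isBeta_numeral (h : IsPAModel M) {c d i : ℕ} {y : M} :
    IsBeta (numeral M c) (numeral M d) (numeral M i) y ↔
      y = numeral M (c % ((i + 1) * d + 1)) := by
  unfold IsBeta
  simp only [numeral_succ, h.numeral_mul]
  constructor
  · rintro ⟨hy, q, hq, e⟩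
    obtain ⟨y, hy', rfl⟩ := h.lt_numeral_iff.1 hy
    obtain ⟨q, rfl⟩ : IsStd q := by
      rcases hq with hq | rfl
      · exact h.isStd_of_lt hq (isStd_numeral c)
      · exact isStd_numeral c
    rw [h.numeral_mul, h.numeral_add, h.numeral_inj] at e
    rw [h.numeral_inj, e, Nat.mul_add_mod_self_right, Nat.mod_eq_of_lt hy']
  · rintro rfl
    refine ⟨h.numeral_lt.2 (Nat.mod_lt _ (Nat.succ_pos _)),
      numeral M (c / ((i + 1) * d + 1)), ?_, ?_⟩
    · rw [h.numeral_lt, h.numeral_inj]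
      exact (Nat.div_le_self _ _).lt_or_eq
    · rw [h.numeral_mul, h.numeral_add, h.numeral_inj, Nat.div_add_mod']

theorem isUniqueBeta_numeral (h : IsPAModel M) {c d i : ℕ} {y : M} :
    IsUniqueBeta (numeral M c) (numeral M d) (numeral M i) y ↔
      y = numeral M (c % ((i + 1) * d + 1)) := by
  simp only [IsUniqueBeta, h.isBeta_numeral]
  exact ⟨And.left, fun e => ⟨e, fun z hz => hz.trans e.symm⟩⟩

theorem recGraph_iff (h : IsPAModel M) {R : M → Prop} {S : M → M → M → Prop} {g : ℕ → ℕ}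
    {n : ℕ} (hR : ∀ e, R e ↔ e = numeral M (g 0))
    (hS : ∀ k < n, ∀ e, S (numeral M k) (numeral M (g k)) e ↔ e = numeral M (g (k + 1)))
    (z : M) : RecGraph R S (numeral M n) z ↔ z = numeral M (g n) := by
  constructor
  · rintro ⟨c, d, h0, hstep, hz⟩
    have key : ∀ k ≤ n, ∀ e, IsUniqueBeta c d (numeral M k) e → e = numeral M (g k) := by
      intro k
      induction k with
      | zero => exact fun _ e he => (hR e).1 (h0 e he)
      | succ k ih =>
        intro hk e he
        obtain ⟨e₀, e₁, he₀, he₁, hs⟩ := hstep (numeral M k) (h.numeral_lt.2 hk)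
        rw [ih (by omega) e₀ he₀, hS k hk] at hs
        rw [← hs]
        exact he₁.2 e he.1
    exact key n le_rfl z hz
  · rintro rfl
    obtain ⟨c, d, hl⟩ : ∃ c d, ∀ i ≤ n, c % ((i + 1) * d + 1) = g i := by
      let l := List.ofFn fun i : Fin (n + 1) => g i
      refine ⟨(Nat.unbeta l).unpair.1, (Nat.unbeta l).unpair.2, fun i hi => ?_⟩
      have := Nat.beta_unbeta_coe l ⟨i, by simp [l]; omega⟩
      simpa only [l, Nat.beta, Fin.getElem_fin, List.getElem_ofFn] using this
    refine ⟨numeral M c, numeral M d, ?_, ?_, ?_⟩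
    · intro e he
      rw [hR, ← hl 0 (Nat.zero_le n)]
      exact (h.isUniqueBeta_numeral (i := 0)).1 he
    · intro x hx
      obtain ⟨k, hk, rfl⟩ := h.lt_numeral_iff.1 hx
      refine ⟨numeral M (g k), numeral M (g (k + 1)), h.isUniqueBeta_numeral.2 ?_,
        (h.isUniqueBeta_numeral (i := k + 1)).2 ?_, (hS k hk _).2 rfl⟩
      · rw [hl k hk.le]
      · rw [hl (k + 1) hk]
    · rw [h.isUniqueBeta_numeral, hl n le_rfl]

end IsPAModel

/-- `z` is the code `Nat.pair a b`, computed in `M`. -/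
def IsPair (a b z : M) : Prop :=
  (ltM a b ∧ z = addM (mulM b b) a) ∨ (¬ ltM a b ∧ z = addM (addM (mulM a a) a) b)

theorem Def.isPair {a b z : (ℕ → M) → M} (ha : TermFun a) (hb : TermFun b) (hz : TermFun z) :
    Def fun v => IsPair (a v) (b v) (z v) := by
  unfold IsPair
  apply_rules [TermFun.add, TermFun.mul, Def.eq, Def.lt, Def.not, Def.and, Def.or]

namespace IsPAModel

theorem isPair_numeral (h : IsPAModel M) {a b : ℕ} {z : M} :
    IsPair (numeral M a) (numeral M b) z ↔ z = numeral M (Nat.pair a b) := by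
  simp only [IsPair, h.numeral_lt, h.numeral_mul, h.numeral_add, Nat.pair]
  split_ifs with hab <;> simp [hab]

theorem isPair_numeral_right (h : IsPAModel M) {a b : M} {p : ℕ} :
    IsPair a b (numeral M p) ↔ a = numeral M p.unpair.1 ∧ b = numeral M p.unpair.2 := by
  constructor
  · intro hp
    have hstd : IsStd a ∧ IsStd b := by
      rcases hp with ⟨-, hp⟩ | ⟨-, hp⟩
      · have hb := h.isStd_of_add ⟨p, hp.symm⟩
        refine ⟨hb.2, ?_⟩
        rcases h.zero_or_succ b with rfl | ⟨b, rfl⟩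
        · exact isStd_numeral 0
        · exact h.isStd_of_mul_succ hb.1
      · have hb := h.isStd_of_add ⟨p, hp.symm⟩
        exact ⟨(h.isStd_of_add hb.1).2, hb.2⟩
    obtain ⟨⟨a, rfl⟩, ⟨b, rfl⟩⟩ := hstd
    rw [h.isPair_numeral, h.numeral_inj] at hp
    simp [hp]
  · rintro ⟨rfl, rfl⟩
    rw [h.isPair_numeral, Nat.pair_unpair]

end IsPAModel

/-! ### Binary digits and comprehension -/

/-- `y = 2 ^ x`, computed in `M`. -/
def IsTwoPow (x y : M) : Prop :=
  RecGraph (fun e => e = numeral M 1) (fun _ e e' => e' = addM e e) x y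

/-- The `x`-th binary digit of `a` is `1`. -/
def Digit (a x : M) : Prop :=
  ∃ y y', IsTwoPow x y ∧ IsTwoPow (addM x (oneM M)) y' ∧
    ∃ u v, a = addM (mulM u y') (addM y v) ∧ ltM v y

theorem Def.digit {a x : (ℕ → M) → M} (ha : TermFun a) (hx : TermFun x) :
    Def fun v => Digit (a v) (x v) := by
  have hpow : Def₂ (IsTwoPow (M := M)) := by
    unfold Def₂ IsTwoPow
    apply Def.recGraph <;> apply_rules [TermFun.var, TermFun.const, TermFun.add, Def.eq]
  have key : Def₂ (Digit (M := M)) := by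
    unfold Def₂ Digit
    apply_rules [hpow.app, TermFun.var, TermFun.const, TermFun.add, TermFun.mul, Def.eq, Def.lt,
      Def.and, Def.ex]
  exact key.app ha hx

namespace IsPAModel

theorem isTwoPow_numeral (h : IsPAModel M) {n : ℕ} {y : M} :
    IsTwoPow (numeral M n) y ↔ y = numeral M (2 ^ n) := by
  refine h.recGraph_iff (g := fun n => 2 ^ n) (fun _ => Iff.rfl) (fun k _ e => ?_) y
  rw [h.numeral_add, ← Nat.mul_two, ← Nat.pow_succ]

theorem digit_numeral (h : IsPAModel M) {a : M} {i : ℕ} :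
    Digit a (numeral M i) ↔ digitB a i := by
  simp only [Digit, numeral_succ, h.isTwoPow_numeral, exists_eq_left, digitB,
    exists_and_left]

theorem digitB_numeral (h : IsPAModel M) {a i : ℕ} :
    digitB (numeral M a) i ↔ a.testBit i = true := by
  have key : a.testBit i = true ↔
      ∃ u v, a = u * 2 ^ (i + 1) + (2 ^ i + v) ∧ v < 2 ^ i := by
    have hpos : 0 < 2 ^ i := by positivity
    rw [Nat.testBit_eq_decide_div_mod_eq, decide_eq_true_iff]
    constructor
    · intro hmod
      refine ⟨a / 2 ^ i / 2, a % 2 ^ i, ?_, Nat.mod_lt _ hpos⟩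
      have h1 := Nat.div_add_mod' (a / 2 ^ i) 2
      have h2 := Nat.div_add_mod' a (2 ^ i)
      rw [hmod] at h1
      rw [← h1] at h2
      rw [pow_succ]
      linarith
    · rintro ⟨u, v, rfl, hv⟩
      have : u * 2 ^ (i + 1) + (2 ^ i + v) = v + 2 ^ i * (2 * u + 1) := by ring
      rw [this, Nat.add_mul_div_left _ _ hpos, Nat.div_eq_of_lt hv]
      omega
  rw [key]
  constructor
  · rintro ⟨u, v, e, hv⟩
    obtain ⟨v, hv', rfl⟩ := h.lt_numeral_iff.1 hv
    obtain ⟨k, hk⟩ : ∃ k, 2 ^ (i + 1) = k + 1 :=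
      Nat.exists_eq_succ_of_ne_zero (by positivity)
    obtain ⟨u, rfl⟩ : IsStd u := by
      have hu := (h.isStd_of_add ⟨a, e.symm⟩).1
      rw [hk] at hu
      exact h.isStd_of_mul_succ hu
    rw [h.numeral_mul, h.numeral_add, h.numeral_add, h.numeral_inj] at e
    exact ⟨u, v, e, hv'⟩
  · rintro ⟨u, v, e, hv⟩
    exact ⟨numeral M u, numeral M v,
      by rw [h.numeral_mul, h.numeral_add, h.numeral_add, ← e], h.numeral_lt.2 hv⟩

end IsPAModel

theorem exists_nat_testBit (X : Set ℕ) (n : ℕ) :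
    ∃ a, n < a ∧ ∀ i < n, (a.testBit i = true ↔ i ∈ X) := by
  classical
  refine ⟨Nat.ofBits (fun i : Fin n => decide ((i : ℕ) ∈ X)) + 2 ^ n,
    Nat.lt_two_pow_self.trans_le (Nat.le_add_left _ _), fun i hi => ?_⟩
  rw [Nat.add_comm, Nat.testBit_two_pow_add_gt hi, Nat.testBit_ofBits_lt _ _ hi]
  simp

theorem NonstandardModel.mem_SSy (hM : NonstandardModel M) {P : M → Prop} (hP : Def₁ P) :
    {n | P (numeral M n)} ∈ SSy M := by
  have h := hM.1
  obtain ⟨n, hn, a, hna, ha⟩ := hM.overspill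
    (P := fun n => ∃ a, ltM n a ∧ ∀ i, ltM i n → (Digit a i ↔ P i)) (by
      unfold Def₁
      apply_rules [Def.digit, hP.app, TermFun.var, Def.lt, Def.and, Def.iff, Def.imp, Def.all,
        Def.ex]) fun n => by
    obtain ⟨a, hna, ha⟩ := exists_nat_testBit {n | P (numeral M n)} n
    refine ⟨numeral M a, h.numeral_lt.2 hna, fun i hi => ?_⟩
    obtain ⟨i, hi', rfl⟩ := h.lt_numeral_iff.1 hi
    rw [h.digit_numeral, h.digitB_numeral, ha i hi']
    rfl
  refine ⟨a, fun hstd => hn (h.isStd_of_lt hna hstd), fun i => ?_⟩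
  rw [← h.digit_numeral, ha _ ((h.numeral_lt_or_isStd i n).resolve_right hn)]
  rfl

theorem NonstandardModel.exists_def_of_mem_SSy (hM : NonstandardModel M) {X : Set ℕ}
    (hX : X ∈ SSy M) : ∃ P : M → Prop, Def₁ P ∧ ∀ n, P (numeral M n) ↔ n ∈ X := by
  obtain ⟨a, -, ha⟩ := hX
  exact ⟨Digit a, Def.digit (TermFun.const a) (TermFun.var 0),
    fun n => hM.1.digit_numeral.trans (ha n).symm⟩

/-! ### Closure properties of the standard system -/

theorem NonstandardModel.turingJoin_mem_SSy (hM : NonstandardModel M) {X Y : Set ℕ}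
    (hX : X ∈ SSy M) (hY : Y ∈ SSy M) : turingJoin X Y ∈ SSy M := by
  have h := hM.1
  obtain ⟨P, hP, hPX⟩ := hM.exists_def_of_mem_SSy hX
  obtain ⟨Q, hQ, hQY⟩ := hM.exists_def_of_mem_SSy hY
  convert hM.mem_SSy (P := fun x => (∃ y, P y ∧ x = addM y y) ∨
    ∃ y, Q y ∧ x = addM (addM y y) (oneM M)) (by
      unfold Def₁
      apply_rules [hP.app, hQ.app, TermFun.var, TermFun.const, TermFun.add, Def.eq, Def.and, Def.or,
        Def.ex]) using 1
  ext n
  refine or_congr ⟨?_, ?_⟩ ⟨?_, ?_⟩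
  · rintro ⟨m, hm, rfl⟩
    exact ⟨numeral M m, (hPX m).2 hm, by rw [h.numeral_add, two_mul]⟩
  · rintro ⟨y, hy, e⟩
    obtain ⟨m, rfl⟩ := (h.isStd_of_add ⟨n, e.symm⟩).1
    rw [h.numeral_add, h.numeral_inj] at e
    exact ⟨m, (hPX m).1 hy, by omega⟩
  · rintro ⟨m, hm, rfl⟩
    exact ⟨numeral M m, (hQY m).2 hm, by rw [h.numeral_add, numeral_succ, two_mul]⟩
  · rintro ⟨y, hy, e⟩
    obtain ⟨m, rfl⟩ := (h.isStd_of_add (h.isStd_of_add ⟨n, e.symm⟩).1).1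
    rw [h.numeral_add, numeral_succ, h.numeral_inj] at e
    exact ⟨m, (hQY m).1 hy, by omega⟩

/-- The relation `G` on `M` computes the partial function `f` on its domain. -/
def Represents (G : M → M → Prop) (f : ℕ →. ℕ) : Prop :=
  ∀ n m, m ∈ f n → ∀ z, G (numeral M n) z ↔ z = numeral M m

theorem IsPAModel.exists_represents (h : IsPAModel M) {O : ℕ → ℕ}
    (hO : ∃ G : M → M → Prop, Def₂ G ∧ Represents G O) {f : ℕ →. ℕ} (hf : RecursiveIn O f) :
    ∃ G : M → M → Prop, Def₂ G ∧ Represents G f := by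
  induction hf with
  | zero =>
    refine ⟨fun _ z => z = numeral M 0, Def.eq (TermFun.var 1) (TermFun.const _), ?_⟩
    rintro n m hm z
    rw [Part.mem_some_iff.1 hm]
  | succ =>
    refine ⟨fun x z => z = addM x (oneM M),
      Def.eq (TermFun.var 1) (TermFun.add (TermFun.var 0) (TermFun.const _)), ?_⟩
    rintro n m hm z
    rw [Part.mem_some_iff.1 hm]
    rfl
  | left =>
    refine ⟨fun x z => ∃ y, IsPair z y x, ?_, ?_⟩
    · unfold Def₂
      apply_rules [Def.isPair, TermFun.var, Def.ex]
    · rintro n m hm z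
      rw [Part.mem_some_iff.1 hm]
      simp [h.isPair_numeral_right]
  | right =>
    refine ⟨fun x z => ∃ y, IsPair y z x, ?_, ?_⟩
    · unfold Def₂
      apply_rules [Def.isPair, TermFun.var, Def.ex]
    · rintro n m hm z
      rw [Part.mem_some_iff.1 hm]
      simp [h.isPair_numeral_right]
  | oracle => exact hO
  | @pair f g _ _ ihf ihg =>
    obtain ⟨F, hF, hFf⟩ := ihf
    obtain ⟨G, hG, hGg⟩ := ihg
    refine ⟨fun x z => ∃ a b, F x a ∧ G x b ∧ IsPair a b z, ?_, ?_⟩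
    · unfold Def₂
      apply_rules [hF.app, hG.app, Def.isPair, TermFun.var, Def.and, Def.ex]
    · intro n m hm z
      obtain ⟨a, ha, b, hb, rfl⟩ : ∃ a ∈ f n, ∃ b ∈ g n, Nat.pair a b = m := by
        simpa [Seq.seq] using hm
      simp [hFf n a ha, hGg n b hb, h.isPair_numeral]
  | @comp f g _ _ ihf ihg =>
    obtain ⟨F, hF, hFf⟩ := ihf
    obtain ⟨G, hG, hGg⟩ := ihg
    refine ⟨fun x z => ∃ y, G x y ∧ F y z, ?_, ?_⟩
    · unfold Def₂
      apply_rules [hF.app, hG.app, TermFun.var, Def.and, Def.ex]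
    · intro n m hm z
      obtain ⟨a, ha, hm⟩ := Part.mem_bind_iff.1 hm
      simp [hGg n a ha, hFf a m hm]
  | @prec f g _ _ ihf ihg =>
    obtain ⟨F, hF, hFf⟩ := ihf
    obtain ⟨G, hG, hGg⟩ := ihg
    refine ⟨fun x z => ∃ a n, IsPair a n x ∧ RecGraph (F a)
      (fun k e e' => ∃ q r, IsPair k e q ∧ IsPair a q r ∧ G r e') n z, ?_, ?_⟩
    · unfold Def₂
      refine Def.ex (Def.ex (Def.and ?_ (Def.recGraph ?_ ?_ ?_ ?_))) <;>
      apply_rules [hF.app, hG.app, Def.isPair, TermFun.var, Def.and, Def.ex]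
    · intro p m hm z
      simp only [h.isPair_numeral_right, and_assoc, exists_and_left, exists_eq_left]
      let r : ℕ → Part ℕ := fun k => Nat.rec (f p.unpair.1)
        (fun y IH => IH.bind fun i => g (Nat.pair p.unpair.1 (Nat.pair y i))) k
      have hr : ∀ k, r (k + 1) = (r k).bind fun i => g (Nat.pair p.unpair.1 (Nat.pair k i)) :=
        fun _ => rfl
      have hdom : ∀ j k, k + j = p.unpair.2 → ∃ x, x ∈ r k := by
        intro j
        induction j with
        | zero => rintro k rfl; exact ⟨m, hm⟩
        | succ j ih =>
          intro k hk
          obtain ⟨x, hx⟩ := ih (k + 1) (by omega)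
          rw [hr] at hx
          exact (Part.mem_bind_iff.1 hx).imp fun _ => And.left
      have hval : ∀ k ≤ p.unpair.2, ∃ x, x ∈ r k := fun k hk =>
        hdom (p.unpair.2 - k) k (by omega)
      choose! t ht using hval
      have htm : t p.unpair.2 = m := Part.mem_unique (ht _ le_rfl) hm
      rw [← htm]
      refine h.recGraph_iff (hFf _ _ (ht 0 (Nat.zero_le _))) (fun k hk e => ?_) z
      have hstep := ht (k + 1) hk
      rw [hr] at hstep
      obtain ⟨i, hi, hstep⟩ := Part.mem_bind_iff.1 hstep
      rw [Part.mem_unique hi (ht k hk.le)] at hstep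
      simp [h.isPair_numeral, hGg _ _ hstep]
  | @rfind f _ ihf =>
    obtain ⟨F, hF, hFf⟩ := ihf
    refine ⟨fun x z => (∃ p, IsPair x z p ∧ F p (zeroM M)) ∧
      ∀ w, ltM w z → ∃ p, IsPair x w p ∧ ∃ e, e ≠ zeroM M ∧ F p e, ?_, ?_⟩
    · unfold Def₂
      apply_rules [hF.app, Def.isPair, TermFun.var, TermFun.const, Def.eq, Def.lt, Def.not, Def.and,
        Def.imp, Def.all, Def.ex]
    · intro n m hm z
      obtain ⟨hzero, hne⟩ := Nat.mem_rfind.1 hm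
      replace hzero : 0 ∈ f (Nat.pair n m) := by simpa using hzero
      replace hne : ∀ k < m, ∃ e ≠ 0, e ∈ f (Nat.pair n k) := by
        intro k hk
        obtain ⟨e, he, he'⟩ := (Part.mem_map_iff _).1 (hne hk)
        exact ⟨e, by simpa using he', he⟩
      constructor
      · rintro ⟨⟨p, hp, hp0⟩, hlt⟩
        rcases h.numeral_lt_or_isStd m z with hmz | ⟨k, rfl⟩
        · obtain ⟨q, hq, e, he, hqe⟩ := hlt _ hmz
          rw [h.isPair_numeral.1 hq, hFf _ _ hzero] at hqe
          exact absurd hqe he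
        rw [h.isPair_numeral.1 hp] at hp0
        rcases lt_trichotomy k m with hkm | rfl | hkm
        · obtain ⟨e, he, hfe⟩ := hne k hkm
          exact absurd (h.numeral_injective ((hFf _ _ hfe (numeral M 0)).1 hp0)).symm he
        · rfl
        · obtain ⟨q, hq, e, he, hqe⟩ := hlt _ (h.numeral_lt.2 hkm)
          rw [h.isPair_numeral.1 hq, hFf _ _ hzero] at hqe
          exact absurd hqe he
      · rintro rfl
        refine ⟨⟨_, h.isPair_numeral.2 rfl, (hFf _ _ hzero _).2 rfl⟩, fun w hw => ?_⟩
        obtain ⟨k, hk, rfl⟩ := h.lt_numeral_iff.1 hw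
        obtain ⟨e, he, hfe⟩ := hne k hk
        exact ⟨_, h.isPair_numeral.2 rfl, numeral M e, fun h0 => he (h.numeral_injective h0),
          (hFf _ _ hfe _).2 rfl⟩

theorem NonstandardModel.mem_SSy_of_turingLE (hM : NonstandardModel M) {X Y : Set ℕ}
    (hX : X ∈ SSy M) (hYX : TuringLE Y X) : Y ∈ SSy M := by
  have h := hM.1
  obtain ⟨P, hP, hPX⟩ := hM.exists_def_of_mem_SSy hX
  obtain ⟨G, hG, hGY⟩ := h.exists_represents (M := M) (O := charFn X)
    ⟨fun x z => (P x ∧ z = numeral M 1) ∨ (¬ P x ∧ z = numeral M 0), by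
      unfold Def₂
      apply_rules [hP.app, TermFun.var, TermFun.const, Def.eq, Def.not, Def.and, Def.or], by
      intro n m hm z
      simp only [hPX]
      rw [Part.mem_some_iff.1 hm, charFn]
      split_ifs with hn <;> simp [hn]⟩ hYX
  convert hM.mem_SSy (P := fun x => G x (numeral M 1))
    (hG.app (TermFun.var 0) (TermFun.const _)) using 1
  ext n
  rw [Set.mem_ofPred_eq, hGY n (charFn Y n) (Part.mem_some _), h.numeral_inj, charFn]
  split_ifs with hn <;> simp [hn]

/-- `z` is the code of the sequence of the first `m` binary digits of `a`. -/
def IsDigitsCode (a m z : M) : Prop :=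
  RecGraph (fun e => e = zeroM M) (fun k e e' => ∃ j, addM j (addM k (oneM M)) = m ∧
    ∃ b, ((Digit a j ∧ b = numeral M 1) ∨ (¬ Digit a j ∧ b = numeral M 0)) ∧
      ∃ p, IsPair b e p ∧ e' = addM p (oneM M)) m z

theorem Def.isDigitsCode {a m z : (ℕ → M) → M} (ha : TermFun a) (hm : TermFun m)
    (hz : TermFun z) : Def fun v => IsDigitsCode (a v) (m v) (z v) := by
  have key : Def fun v : ℕ → M => IsDigitsCode (v 0) (v 1) (v 2) := by
    unfold IsDigitsCode
    apply Def.recGraph <;> apply_rules [Def.digit, Def.isPair, TermFun.var, TermFun.const,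
      TermFun.add, Def.eq, Def.not, Def.and, Def.or, Def.ex]
  refine key.subst (F := fun j => ([a, m][j]?).getD z) fun j => ?_
  match j with
  | 0 => exact ha
  | 1 => exact hm
  | j + 2 => exact hz

theorem IsPAModel.isDigitsCode_numeral (h : IsPAModel M) {a : M} {f : ℕ → Bool}
    (hf : ∀ i, f i = true ↔ digitB a i) {m : ℕ} {z : M} :
    IsDigitsCode a (numeral M m) z ↔
      z = numeral M (Encodable.encode (List.ofFn fun i : Fin m => f i)) := by
  let g : ℕ → ℕ := fun k => Encodable.encode ((List.ofFn fun i : Fin m => f i).drop (m - k))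
  have hg : g m = Encodable.encode (List.ofFn fun i : Fin m => f i) := by simp [g]
  rw [← hg]
  refine h.recGraph_iff (g := g) (fun e => ?_) (fun k hk e => ?_) z
  · simp only [g]
    rw [List.drop_of_length_le (by simp)]
    rfl
  · have hstep : g (k + 1) = Nat.pair (Encodable.encode (f (m - (k + 1)))) (g k) + 1 := by
      simp only [g]
      rw [List.drop_eq_getElem_cons (by simp; omega), Encodable.encode_list_cons]
      simp [show m - (k + 1) + 1 = m - k by omega]
    have hj : ∀ j : M, addM j (addM (numeral M k) (oneM M)) = numeral M m ↔
        j = numeral M (m - (k + 1)) := by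
      intro j
      rw [numeral_succ]
      constructor
      · intro e
        obtain ⟨j, rfl⟩ := (h.isStd_of_add ⟨m, e⟩).1
        rw [h.numeral_add, h.numeral_inj] at e
        rw [h.numeral_inj]
        omega
      · rintro rfl
        rw [h.numeral_add, h.numeral_inj]
        omega
    simp only [hj, exists_eq_left, h.digit_numeral, ← hf]
    have hb : ∀ b : M, ((f (m - (k + 1)) = true ∧ b = numeral M 1) ∨
        (¬ f (m - (k + 1)) = true ∧ b = numeral M 0)) ↔
        b = numeral M (Encodable.encode (f (m - (k + 1)))) := by
      intro b
      cases f (m - (k + 1)) <;> simp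
    simp only [hb, exists_eq_left, h.isPair_numeral, hstep, numeral_succ]

theorem exists_mem_tree_of_length {T : Set ℕ} (hT : IsBinTreeSet T) (hinf : TreeInf T) (n : ℕ) :
    ∃ s : List Bool, s.length = n ∧ Encodable.encode s ∈ T := by
  by_contra! hcon
  refine hinf ((List.finite_length_lt Bool n).subset fun s hs => ?_)
  by_contra! hlen
  exact hcon (s.take n) (List.length_take_of_le (not_lt.1 hlen)) (hT s hs _ (List.take_prefix n s))

theorem NonstandardModel.exists_pathThrough (hM : NonstandardModel M) {T : Set ℕ}
    (hTM : T ∈ SSy M) (hT : IsBinTreeSet T) (hinf : TreeInf T) :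
    ∃ P ∈ SSy M, PathThrough P T := by
  have h := hM.1
  obtain ⟨Q, hQ, hQT⟩ := hM.exists_def_of_mem_SSy hTM
  obtain ⟨n, hn, a, ha⟩ := hM.overspill
    (P := fun n => ∃ a, ∀ m, ltM m n → ∃ z, IsDigitsCode a m z ∧ Q z) (by
      unfold Def₁
      apply_rules [Def.isDigitsCode, hQ.app, TermFun.var, Def.lt, Def.and, Def.imp, Def.all,
        Def.ex]) fun n => by
    obtain ⟨s, hs, hsT⟩ := exists_mem_tree_of_length hT hinf n
    obtain ⟨a, -, ha⟩ := exists_nat_testBit {i | s[i]? = some true} n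
    refine ⟨numeral M a, fun x hx => ?_⟩
    obtain ⟨m, hm, rfl⟩ := h.lt_numeral_iff.1 hx
    refine ⟨_, (h.isDigitsCode_numeral (f := a.testBit) fun i => h.digitB_numeral.symm).2 rfl, ?_⟩
    rw [hQT]
    convert hT s hsT _ (List.take_prefix m s) using 2
    apply List.ext_getElem
    · simp; omega
    · intro i h1 h2
      have hi : i < m := by simpa using h1
      rw [List.getElem_ofFn, List.getElem_take, Bool.eq_iff_iff, ha i (by omega)]
      simp [List.getElem?_eq_getElem (show i < s.length by omega)]
  refine ⟨{i | Digit a (numeral M i)},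
    hM.mem_SSy (Def.digit (TermFun.const a) (TermFun.var 0)), fun f hf m => ?_⟩
  obtain ⟨z, hz, hzT⟩ := ha (numeral M m) ((h.numeral_lt_or_isStd m n).resolve_right hn)
  rw [h.isDigitsCode_numeral fun i => (hf i).trans h.digit_numeral] at hz
  rwa [hz, hQT] at hzT

end Recursion

end Arith

open Arith in
/-- **Scott's theorem.** The standard system of any non-standard model of `PA` is a
Scott set: it is closed under Turing join (S1) and Turing reducibility (S2), and every
infinite binary tree in it has an infinite path in it (S3). -/
theorem statement_0 (M : Type*) [arith.Structure M] (hM : NonstandardModel M) :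
    ScottSet (SSy M) := by
  exact ⟨⟨_, hM.mem_SSy (P := fun _ => zeroM M = zeroM M)
      (Def.eq (TermFun.const _) (TermFun.const _))⟩,
    ⟨fun _ hX _ hY => hM.turingJoin_mem_SSy hX hY, fun _ hX _ => hM.mem_SSy_of_turingLE hX⟩,
    fun _ hT => hM.exists_pathThrough hT⟩
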